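/- Define the norms ‖u‖_L := √(B(u,Pu)) and ‖v‖_X := √(∫_{−1}^{1} ‖v(s)‖²_A ds) on V_p. Then for all u, v ∈ V_p: (i) |B(u,v)| ≤ ‖u‖_L ‖v‖_X; (ii) ‖Pu‖_X = ‖u‖_L; and consequently (iii) for every nonzero u ∈ V_p, the supremum over nonzero v ∈ V_p of B(u,v)/‖v‖_X equals ‖u‖_L, the supremum being attained at v = Pu. -/

import Mathlib

open Matrix Polynomial

/-- The `k`-th Legendre polynomial (Rodrigues' formula), normalized so that `L_k(1) = 1`. -/
noncomputable def legendre (k : ℕ) : Polynomial ℝ :=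
  ((2 ^ k * (Nat.factorial k) : ℝ))⁻¹ •
    ((fun q => Polynomial.derivative q)^[k] ((Polynomial.X ^ 2 - 1) ^ k))

/-- Evaluation at `s` of the `ℝⁿ`-valued polynomial with coefficients `c` (degree ≤ p). -/
noncomputable def pev {n p : ℕ} (c : Fin (p + 1) → Fin n → ℝ) (s : ℝ) : Fin n → ℝ :=
  ∑ j : Fin (p + 1), s ^ (j : ℕ) • c j

/-- Evaluation at `s` of the derivative of the `ℝⁿ`-valued polynomial with coefficients `c`. -/
noncomputable def pdev {n p : ℕ} (c : Fin (p + 1) → Fin n → ℝ) (s : ℝ) : Fin n → ℝ :=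
  ∑ j : Fin (p + 1), ((((j : ℕ) : ℝ)) * s ^ ((j : ℕ) - 1)) • c j

/-- Evaluation at `s` of `(I v)'`, the derivative of the reconstruction `I v` of the
`ℝⁿ`-valued polynomial `v` with coefficients `c`, where the reconstruction operator
`I v := v − v(−1)·(−1)^p (L_p − L_{p+1})/2` acts coefficientwise. -/
noncomputable def reconD {n p : ℕ} (c : Fin (p + 1) → Fin n → ℝ) (s : ℝ) : Fin n → ℝ :=
  pdev c s -
    ((-1 : ℝ) ^ p * (Polynomial.derivative (legendre p - legendre (p + 1))).eval s / 2) •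
      pev c (-1)

/-- The DG bilinear form `B(u, ·)` applied to a test function `g : ℝ → ℝⁿ`:
`B(u,g) = ∫_{−1}^{1} (u'(s), g(s))_M ds + (u(−1), g(−1))_M + (τ/2) ∫_{−1}^{1} (u(s), g(s))_A ds`,
where `(u,v)_M := vᵀ M u`. -/
noncomputable def Bform {n p : ℕ} (M A : Matrix (Fin n) (Fin n) ℝ) (τ : ℝ)
    (c : Fin (p + 1) → Fin n → ℝ) (g : ℝ → Fin n → ℝ) : ℝ :=
  (∫ s in (-1 : ℝ)..1, g s ⬝ᵥ (M *ᵥ pdev c s)) + g (-1) ⬝ᵥ (M *ᵥ pev c (-1)) +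
    (τ / 2) * ∫ s in (-1 : ℝ)..1, g s ⬝ᵥ (A *ᵥ pev c s)

/-- The operator `P v := A⁻¹ M (I v)' + (τ/2) v`, evaluated at `s`. -/
noncomputable def Pop {n p : ℕ} (M A : Matrix (Fin n) (Fin n) ℝ) (τ : ℝ)
    (c : Fin (p + 1) → Fin n → ℝ) (s : ℝ) : Fin n → ℝ :=
  (A⁻¹ * M) *ᵥ reconD c s + (τ / 2) • pev c s

/-- The parabolic energy norm `‖u‖_L := √(B(u, P u))`. -/
noncomputable def Lnorm {n p : ℕ} (M A : Matrix (Fin n) (Fin n) ℝ) (τ : ℝ)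
    (c : Fin (p + 1) → Fin n → ℝ) : ℝ :=
  Real.sqrt (Bform M A τ c (fun s => Pop M A τ c s))

/-- The test norm `‖g‖_X := √(∫_{−1}^{1} ‖g(s)‖²_A ds)`. -/
noncomputable def Xnorm {n : ℕ} (A : Matrix (Fin n) (Fin n) ℝ) (g : ℝ → Fin n → ℝ) : ℝ :=
  Real.sqrt (∫ s in (-1 : ℝ)..1, g s ⬝ᵥ (A *ᵥ g s))

/-! `Pu` is the Riesz representer of `B(u, ·)` for the weighted `L²` inner product:
`B(u, v) = ∫ (Pu, v)_A` for every `v ∈ V_p`. Indeed, writing `I v = v − v(−1) φ` with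
`φ = (−1)^p (L_p − L_{p+1})/2`, the orthogonality of the Legendre polynomials together with
`φ(1) = 0` and `φ(−1) = 1` makes `−φ'` the Dirac mass at `−1` on polynomials of degree at most `p`,
so `(I u)'` encodes both the derivative of `u` and the jump term. As `Pu` itself lies in `V_p`, the
three claims are the Cauchy–Schwarz inequality and its equality case. -/

section IteratedDerivatives

theorem isRoot_iterate_derivative_pow {R : Type*} [CommRing R] {f : R[X]} {a : R}
    (ha : f.IsRoot a) {i k : ℕ} (hik : i < k) : (derivative^[i] (f ^ k)).IsRoot a :=
  ha.dvd ((dvd_pow_self f (Nat.sub_ne_zero_of_lt hik)).trans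
    (pow_sub_dvd_iterate_derivative_pow f k i))

theorem eval_iterate_derivative_pow_self {R : Type*} [CommRing R] {f : R[X]} {a : R}
    (ha : f.IsRoot a) (k : ℕ) :
    (derivative^[k] (f ^ k)).eval a = k.factorial * (derivative f).eval a ^ k := by
  obtain ⟨g, rfl⟩ := dvd_iff_isRoot.2 ha
  have h := aeval_iterate_derivative_self (A := R) (((X - C a) * g) ^ k) k a (p' := g ^ k)
    (by rw [Algebra.algebraMap_self, Polynomial.map_id, mul_pow])
  simpa [coe_aeval_eq_eval, derivative_mul] using h

theorem degree_derivative_lt_of_degree_le {R : Type*} [Semiring R] {q : R[X]} {p : ℕ}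
    (hq : q.degree ≤ p) : (derivative q).degree < p := by
  rcases eq_or_ne q 0 with rfl | hq0
  · simp
  · exact (degree_derivative_lt hq0).trans_le hq

theorem integral_derivative_mul (f q : ℝ[X]) (a b : ℝ) :
    ∫ s in a..b, (derivative f).eval s * q.eval s =
      f.eval b * q.eval b - f.eval a * q.eval a -
        ∫ s in a..b, f.eval s * (derivative q).eval s := by
  have h := intervalIntegral.integral_mul_deriv_eq_deriv_mul (a := a) (b := b)
    (fun x _ => q.hasDerivAt x) (fun x _ => f.hasDerivAt x)
    ((derivative q).continuous.intervalIntegrable _ _)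
    ((derivative f).continuous.intervalIntegrable _ _)
  simpa only [mul_comm] using h

theorem integral_iterate_derivative_mul {f : ℝ[X]} {a b : ℝ} {k : ℕ}
    (ha : ∀ i < k, (derivative^[i] f).IsRoot a) (hb : ∀ i < k, (derivative^[i] f).IsRoot b)
    (q : ℝ[X]) :
    ∫ s in a..b, (derivative^[k] f).eval s * q.eval s =
      (-1) ^ k * ∫ s in a..b, f.eval s * (derivative^[k] q).eval s := by
  induction k generalizing q with
  | zero => simp
  | succ k ih =>
    rw [Function.iterate_succ_apply', integral_derivative_mul, ha k k.lt_succ_self,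
      hb k k.lt_succ_self, ih (fun i hi => ha i (hi.trans k.lt_succ_self))
        (fun i hi => hb i (hi.trans k.lt_succ_self)), ← Function.iterate_succ_apply]
    ring

end IteratedDerivatives

section Legendre

theorem isRoot_X_sq_sub_one {a : ℝ} (ha : a ^ 2 = 1) : (X ^ 2 - 1 : ℝ[X]).IsRoot a := by
  simp [ha]

theorem eval_legendre (k : ℕ) (s : ℝ) :
    (legendre k).eval s =
      (2 ^ k * (k.factorial : ℝ))⁻¹ * (derivative^[k] ((X ^ 2 - 1) ^ k : ℝ[X])).eval s :=
  eval_smul ..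

theorem eval_legendre_of_sq_eq_one (k : ℕ) {a : ℝ} (ha : a ^ 2 = 1) :
    (legendre k).eval a = a ^ k := by
  have hd : (derivative (X ^ 2 - 1 : ℝ[X])).eval a = 2 * a := by
    simp [one_add_one_eq_two]
  rw [eval_legendre, eval_iterate_derivative_pow_self (isRoot_X_sq_sub_one ha), hd, mul_pow]
  field_simp

theorem natDegree_legendre_le (k : ℕ) : (legendre k).natDegree ≤ k := by
  have hpow : ((X ^ 2 - 1) ^ k : ℝ[X]).natDegree ≤ k * 2 :=
    natDegree_pow_le_of_le k (by compute_degree)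
  calc (legendre k).natDegree
      ≤ (derivative^[k] ((X ^ 2 - 1) ^ k : ℝ[X])).natDegree := natDegree_smul_le _ _
    _ ≤ ((X ^ 2 - 1) ^ k : ℝ[X]).natDegree - k := natDegree_iterate_derivative _ _
    _ ≤ k := by omega

theorem integral_legendre_mul_eq_zero {k : ℕ} {q : ℝ[X]} (hq : q.degree < k) :
    ∫ s in (-1 : ℝ)..1, (legendre k).eval s * q.eval s = 0 := by
  have hroot {a : ℝ} (ha : a ^ 2 = 1) :
      ∀ i < k, (derivative^[i] ((X ^ 2 - 1) ^ k : ℝ[X])).IsRoot a :=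
    fun _ => isRoot_iterate_derivative_pow (isRoot_X_sq_sub_one ha)
  simp only [eval_legendre, mul_assoc, intervalIntegral.integral_const_mul]
  rw [integral_iterate_derivative_mul (hroot (by norm_num)) (hroot (by norm_num)),
    iterate_derivative_eq_zero_of_degree_lt hq]
  simp

end Legendre

section Reconstruction

/-- The correction polynomial `φ = (−1)^p (L_p − L_{p+1})/2` of the reconstruction operator
`I v = v − v(−1) φ`. -/
noncomputable def correctionPoly (p : ℕ) : ℝ[X] :=
  C ((-1) ^ p / 2) * (legendre p - legendre (p + 1))

theorem eval_one_correctionPoly (p : ℕ) : (correctionPoly p).eval 1 = 0 := by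
  simp [correctionPoly, eval_legendre_of_sq_eq_one]

theorem eval_neg_one_correctionPoly (p : ℕ) : (correctionPoly p).eval (-1) = 1 := by
  have hsq : (-1 : ℝ) ^ p * (-1) ^ p = 1 := by rw [← mul_pow]; simp
  simp only [correctionPoly, eval_mul, eval_C, eval_sub, pow_succ,
    eval_legendre_of_sq_eq_one _ (show (-1 : ℝ) ^ 2 = 1 by norm_num)]
  linear_combination hsq

theorem natDegree_correctionPoly_le (p : ℕ) : (correctionPoly p).natDegree ≤ p + 1 :=
  (natDegree_C_mul_le _ _).trans <| natDegree_sub_le_of_le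
    ((natDegree_legendre_le p).trans p.le_succ) (natDegree_legendre_le (p + 1)) |>.trans
    (max_self _).le

theorem integral_correctionPoly_mul_eq_zero {p : ℕ} {q : ℝ[X]} (hq : q.degree < p) :
    ∫ s in (-1 : ℝ)..1, (correctionPoly p).eval s * q.eval s = 0 := by
  have hq' : q.degree < (p + 1 : ℕ) := hq.trans (by exact_mod_cast p.lt_succ_self)
  have hintegrable (f : ℝ[X]) :
      IntervalIntegrable (fun s => f.eval s * q.eval s) MeasureTheory.volume (-1) 1 :=
    (f.continuous.mul q.continuous).intervalIntegrable _ _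
  simp only [correctionPoly, eval_mul, eval_C, eval_sub, mul_assoc, sub_mul,
    intervalIntegral.integral_const_mul]
  rw [intervalIntegral.integral_sub (hintegrable _) (hintegrable _),
    integral_legendre_mul_eq_zero hq, integral_legendre_mul_eq_zero hq', sub_zero, mul_zero]

theorem integral_derivative_correctionPoly_mul {p : ℕ} {q : ℝ[X]} (hq : q.degree ≤ p) :
    ∫ s in (-1 : ℝ)..1, (derivative (correctionPoly p)).eval s * q.eval s = -q.eval (-1) := by
  rw [integral_derivative_mul, eval_one_correctionPoly, eval_neg_one_correctionPoly,
    integral_correctionPoly_mul_eq_zero (degree_derivative_lt_of_degree_le hq)]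
  ring

theorem reconD_eq {n p : ℕ} (c : Fin (p + 1) → Fin n → ℝ) (s : ℝ) :
    reconD c s = pdev c s - (derivative (correctionPoly p)).eval s • pev c (-1) := by
  simp only [reconD, correctionPoly, derivative_C_mul, eval_mul, eval_C,
    mul_div_right_comm]

end Reconstruction

section VectorPolynomials

/-- The space `V_p` of `ℝⁿ`-valued polynomials of degree at most `p`, as a space of functions. -/
noncomputable def vectorPolys (n p : ℕ) : Submodule ℝ (ℝ → Fin n → ℝ) where
  carrier := Set.range (pev (p := p))
  add_mem' := by
    rintro _ _ ⟨c, rfl⟩ ⟨d, rfl⟩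
    exact ⟨c + d, by ext1 s; simp [pev, Finset.sum_add_distrib]⟩
  zero_mem' := ⟨0, by ext1 s; simp [pev]⟩
  smul_mem' := by
    rintro r _ ⟨c, rfl⟩
    exact ⟨r • c, by ext1 s; simp [pev, Finset.smul_sum, smul_comm r]⟩

variable {n p : ℕ}

theorem pev_mem_vectorPolys (c : Fin (p + 1) → Fin n → ℝ) : pev c ∈ vectorPolys n p := ⟨c, rfl⟩

theorem eval_smul_mem_vectorPolys {q : ℝ[X]} (hq : q.natDegree ≤ p) (w : Fin n → ℝ) :
    (fun s => q.eval s • w) ∈ vectorPolys n p := by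
  refine ⟨fun j => q.coeff j • w, funext fun s => ?_⟩
  rw [eval_eq_sum_range' (Nat.lt_succ_of_le hq), ← Fin.sum_univ_eq_sum_range
    (fun j => q.coeff j * s ^ j), Finset.sum_smul]
  simp only [pev, smul_smul, mul_comm]

theorem mulVec_mem_vectorPolys {m : ℕ} (N : Matrix (Fin m) (Fin n) ℝ) {f : ℝ → Fin n → ℝ}
    (hf : f ∈ vectorPolys n p) : (fun s => N *ᵥ f s) ∈ vectorPolys m p := by
  obtain ⟨c, rfl⟩ := hf
  exact ⟨fun j => N *ᵥ c j, funext fun s => by simp only [pev, mulVec_sum, mulVec_smul]⟩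

theorem pdev_mem_vectorPolys (c : Fin (p + 1) → Fin n → ℝ) : pdev c ∈ vectorPolys n p := by
  have hsum : pdev c = ∑ j : Fin (p + 1),
      fun s => (derivative (X ^ (j : ℕ) : ℝ[X])).eval s • c j := by
    ext1 s
    simp [pdev, derivative_X_pow]
  rw [hsum]
  refine sum_mem fun j _ => eval_smul_mem_vectorPolys ?_ (c j)
  exact (natDegree_derivative_le _).trans (by rw [natDegree_X_pow]; omega)

theorem reconD_mem_vectorPolys (c : Fin (p + 1) → Fin n → ℝ) : reconD c ∈ vectorPolys n p := by
  rw [show reconD c = _ from funext (reconD_eq c)]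
  refine sub_mem (pdev_mem_vectorPolys c) (eval_smul_mem_vectorPolys ?_ _)
  exact (natDegree_derivative_le _).trans (Nat.sub_le_of_le_add (natDegree_correctionPoly_le p))

theorem Pop_mem_vectorPolys (M A : Matrix (Fin n) (Fin n) ℝ) (τ : ℝ)
    (c : Fin (p + 1) → Fin n → ℝ) : Pop M A τ c ∈ vectorPolys n p :=
  add_mem (mulVec_mem_vectorPolys _ (reconD_mem_vectorPolys c))
    (Submodule.smul_mem _ (τ / 2) (pev_mem_vectorPolys c))

theorem continuous_of_mem_vectorPolys {f : ℝ → Fin n → ℝ} (hf : f ∈ vectorPolys n p) :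
    Continuous f := by
  obtain ⟨c, rfl⟩ := hf
  unfold pev
  fun_prop

theorem exists_eval_eq_dotProduct {f : ℝ → Fin n → ℝ} (hf : f ∈ vectorPolys n p)
    (w : Fin n → ℝ) : ∃ q : ℝ[X], q.degree ≤ p ∧ ∀ s, q.eval s = f s ⬝ᵥ w := by
  obtain ⟨c, rfl⟩ := hf
  refine ⟨∑ j : Fin (p + 1), C (c j ⬝ᵥ w) * X ^ (j : ℕ), ?_, fun s => ?_⟩
  · refine (degree_sum_le _ _).trans (Finset.sup_le fun j _ => ?_)
    exact (degree_C_mul_X_pow_le _ _).trans (by exact_mod_cast j.is_le)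
  · simp only [pev, eval_finsetSum, eval_mul, eval_C, eval_pow, eval_X, sum_dotProduct,
      smul_dotProduct, smul_eq_mul, mul_comm]

theorem integral_derivative_correctionPoly_mul_dotProduct {f : ℝ → Fin n → ℝ}
    (hf : f ∈ vectorPolys n p) (w : Fin n → ℝ) :
    ∫ s in (-1 : ℝ)..1, (derivative (correctionPoly p)).eval s * (f s ⬝ᵥ w) =
      -(f (-1) ⬝ᵥ w) := by
  obtain ⟨q, hq, hqf⟩ := exists_eval_eq_dotProduct hf w
  simp only [← hqf]
  exact integral_derivative_correctionPoly_mul hq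

end VectorPolynomials

section WeightedInner

variable {ι : Type*} [Fintype ι]

theorem continuous_dotProduct_mulVec (A : Matrix ι ι ℝ) {f g : ℝ → ι → ℝ}
    (hf : Continuous f) (hg : Continuous g) : Continuous fun s => f s ⬝ᵥ A *ᵥ g s :=
  hf.dotProduct (continuous_const.matrix_mulVec hg)

/-- The bilinear form `(f, g) ↦ ∫_a^b f(s)ᵀ A g(s) ds`, the inner product behind `‖·‖_X`. Its
arguments are restricted to continuous functions so that the integrals converge. -/
noncomputable def weightedForm (A : Matrix ι ι ℝ) (a b : ℝ) :
    LinearMap.BilinForm ℝ C(ℝ, ι → ℝ) :=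
  have hintegrable (f g : C(ℝ, ι → ℝ)) :
      IntervalIntegrable (fun s => f s ⬝ᵥ A *ᵥ g s) MeasureTheory.volume a b :=
    (continuous_dotProduct_mulVec A f.continuous g.continuous).intervalIntegrable a b
  LinearMap.mk₂ ℝ (fun f g => ∫ s in a..b, f s ⬝ᵥ A *ᵥ g s)
    (fun f₁ f₂ g => by
      simp only [ContinuousMap.add_apply, add_dotProduct]
      exact intervalIntegral.integral_add (hintegrable f₁ g) (hintegrable f₂ g))
    (fun r f g => by
      simp only [ContinuousMap.smul_apply, smul_dotProduct, intervalIntegral.integral_smul])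
    (fun f g₁ g₂ => by
      simp only [ContinuousMap.add_apply, mulVec_add, dotProduct_add]
      exact intervalIntegral.integral_add (hintegrable f g₁) (hintegrable f g₂))
    (fun r f g => by
      simp only [ContinuousMap.smul_apply, mulVec_smul, dotProduct_smul,
        intervalIntegral.integral_smul])

theorem isSymm_weightedForm {A : Matrix ι ι ℝ} (hA : A.IsSymm) (a b : ℝ) :
    (weightedForm A a b).IsSymm := by
  refine ⟨fun f g => intervalIntegral.integral_congr fun s _ => ?_⟩
  rw [dotProduct_mulVec, ← mulVec_transpose, hA.eq, dotProduct_comm]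

theorem integral_dotProduct_mulVec_self_nonneg {A : Matrix ι ι ℝ} (hA : A.PosSemidef) {a b : ℝ}
    (hab : a ≤ b) (f : ℝ → ι → ℝ) : 0 ≤ ∫ s in a..b, f s ⬝ᵥ A *ᵥ f s :=
  intervalIntegral.integral_nonneg hab fun s _ => hA.dotProduct_mulVec_nonneg (f s)

theorem abs_integral_dotProduct_mulVec_le {A : Matrix ι ι ℝ} (hA : A.PosSemidef) {a b : ℝ}
    (hab : a ≤ b) {f g : ℝ → ι → ℝ} (hf : Continuous f) (hg : Continuous g) :
    |∫ s in a..b, f s ⬝ᵥ A *ᵥ g s| ≤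
      √(∫ s in a..b, f s ⬝ᵥ A *ᵥ f s) * √(∫ s in a..b, g s ⬝ᵥ A *ᵥ g s) := by
  have hsymm : A.IsSymm := by
    simpa only [IsHermitian, IsSymm, conjTranspose_eq_transpose_of_trivial] using hA.isHermitian
  rw [← Real.sqrt_mul (integral_dotProduct_mulVec_self_nonneg hA hab f)]
  exact Real.abs_le_sqrt ((weightedForm A a b).apply_sq_le_of_symm
    (fun h => integral_dotProduct_mulVec_self_nonneg hA hab h)
    (LinearMap.BilinForm.isSymm_iff.1 (isSymm_weightedForm hsymm a b)) ⟨f, hf⟩ ⟨g, hg⟩)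

end WeightedInner

section RieszRepresentation

variable {n p : ℕ} (M : Matrix (Fin n) (Fin n) ℝ) {A : Matrix (Fin n) (Fin n) ℝ} (τ : ℝ)
  (c : Fin (p + 1) → Fin n → ℝ)

theorem dotProduct_mulVec_Pop (hA : IsUnit A.det) (w : Fin n → ℝ) (s : ℝ) :
    w ⬝ᵥ A *ᵥ Pop M A τ c s =
      w ⬝ᵥ M *ᵥ pdev c s -
        (derivative (correctionPoly p)).eval s * (w ⬝ᵥ M *ᵥ pev c (-1)) +
        τ / 2 * (w ⬝ᵥ A *ᵥ pev c s) := by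
  rw [Pop, mulVec_add, mulVec_mulVec, mul_nonsing_inv_cancel_left _ _ hA, reconD_eq]
  simp only [mulVec_sub, mulVec_smul, dotProduct_add, dotProduct_sub, dotProduct_smul, smul_eq_mul]

theorem Bform_eq_integral_Pop (hA : IsUnit A.det) {g : ℝ → Fin n → ℝ}
    (hg : g ∈ vectorPolys n p) :
    Bform M A τ c g = ∫ s in (-1 : ℝ)..1, g s ⬝ᵥ A *ᵥ Pop M A τ c s := by
  have hgc : Continuous g := continuous_of_mem_vectorPolys hg
  have hder : Continuous fun s => g s ⬝ᵥ M *ᵥ pdev c s :=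
    continuous_dotProduct_mulVec M hgc (continuous_of_mem_vectorPolys (pdev_mem_vectorPolys c))
  have hjump : Continuous fun s =>
      (derivative (correctionPoly p)).eval s * (g s ⬝ᵥ M *ᵥ pev c (-1)) :=
    (derivative (correctionPoly p)).continuous.mul
      (continuous_dotProduct_mulVec M hgc continuous_const)
  have hmass : Continuous fun s => τ / 2 * (g s ⬝ᵥ A *ᵥ pev c s) :=
    (continuous_dotProduct_mulVec A hgc
      (continuous_of_mem_vectorPolys (pev_mem_vectorPolys c))).const_mul _
  simp only [dotProduct_mulVec_Pop M τ c hA]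
  rw [intervalIntegral.integral_add ((hder.fun_sub hjump).intervalIntegrable _ _)
      (hmass.intervalIntegrable _ _),
    intervalIntegral.integral_sub (hder.intervalIntegrable _ _) (hjump.intervalIntegrable _ _),
    integral_derivative_correctionPoly_mul_dotProduct hg, sub_neg_eq_add,
    intervalIntegral.integral_const_mul, Bform]

theorem Xnorm_Pop (hA : IsUnit A.det) : Xnorm A (Pop M A τ c) = Lnorm M A τ c := by
  rw [Lnorm, Bform_eq_integral_Pop M τ c hA (Pop_mem_vectorPolys M A τ c), Xnorm]

theorem Bform_Pop_div_Xnorm_Pop (hA : IsUnit A.det) :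
    Bform M A τ c (Pop M A τ c) / Xnorm A (Pop M A τ c) = Lnorm M A τ c := by
  rw [Xnorm_Pop M τ c hA, Lnorm, Real.div_sqrt]

theorem abs_Bform_le (hA : A.PosDef) {g : ℝ → Fin n → ℝ} (hg : g ∈ vectorPolys n p) :
    |Bform M A τ c g| ≤ Lnorm M A τ c * Xnorm A g := by
  have hdet : IsUnit A.det := A.isUnit_iff_isUnit_det.1 hA.isUnit
  rw [← Xnorm_Pop M τ c hdet, Bform_eq_integral_Pop M τ c hdet hg, mul_comm]
  exact abs_integral_dotProduct_mulVec_le hA.posSemidef (by norm_num)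
    (continuous_of_mem_vectorPolys hg)
    (continuous_of_mem_vectorPolys (Pop_mem_vectorPolys M A τ c))

theorem exists_ne_zero_Lnorm_eq_Bform_div_Xnorm (hA : IsUnit A.det) (hc : c ≠ 0) :
    ∃ d : Fin (p + 1) → Fin n → ℝ, d ≠ 0 ∧
      Lnorm M A τ c = Bform M A τ c (pev d) / Xnorm A (pev d) := by
  obtain ⟨e, he⟩ := Pop_mem_vectorPolys M A τ c
  rcases eq_or_ne e 0 with rfl | he0
  · -- If `Pu = 0`, then `B(u, ·)` vanishes on `V_p` and every nonzero `v` is a maximizer.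
    have hPop : Pop M A τ c = 0 := by rw [← he]; ext1 s; simp [pev]
    refine ⟨c, hc, ?_⟩
    rw [← Xnorm_Pop M τ c hA, Bform_eq_integral_Pop M τ c hA (pev_mem_vectorPolys c), hPop]
    simp [Xnorm]
  · exact ⟨e, he0, by rw [he, Bform_Pop_div_Xnorm_Pop M τ c hA]⟩

end RieszRepresentation

theorem inf_sup_identity_general {n p : ℕ} (M A : Matrix (Fin n) (Fin n) ℝ)
    (hA : A.PosDef) (τ : ℝ) :
    (∀ c d : Fin (p + 1) → Fin n → ℝ,
      |Bform M A τ c (fun s => pev d s)| ≤ Lnorm M A τ c * Xnorm A (fun s => pev d s)) ∧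
    (∀ c : Fin (p + 1) → Fin n → ℝ,
      Xnorm A (fun s => Pop M A τ c s) = Lnorm M A τ c) ∧
    (∀ c : Fin (p + 1) → Fin n → ℝ, c ≠ 0 →
      IsGreatest {x : ℝ | ∃ d : Fin (p + 1) → Fin n → ℝ, d ≠ 0 ∧
          x = Bform M A τ c (fun s => pev d s) / Xnorm A (fun s => pev d s)}
        (Lnorm M A τ c)) := by
  have hdet : IsUnit A.det := A.isUnit_iff_isUnit_det.1 hA.isUnit
  have hbound (c d : Fin (p + 1) → Fin n → ℝ) :
      |Bform M A τ c (pev d)| ≤ Lnorm M A τ c * Xnorm A (pev d) :=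
    abs_Bform_le M τ c hA (pev_mem_vectorPolys d)
  refine ⟨hbound, fun c => Xnorm_Pop M τ c hdet, fun c hc =>
    ⟨exists_ne_zero_Lnorm_eq_Bform_div_Xnorm M τ c hdet hc, ?_⟩⟩
  rintro _ ⟨d, -, rfl⟩
  exact div_le_of_le_mul₀ (Real.sqrt_nonneg _) (Real.sqrt_nonneg _)
    ((le_abs_self _).trans (hbound c d))

/-- **Inf-sup identity.** With `‖u‖_L := √(B(u,Pu))` and `‖v‖_X := √(∫_{−1}^{1} ‖v(s)‖²_A ds)`:
(i) `|B(u,v)| ≤ ‖u‖_L ‖v‖_X` for all `u, v ∈ V_p`; (ii) `‖Pu‖_X = ‖u‖_L`; and consequently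
(iii) for every nonzero `u ∈ V_p`, the supremum over nonzero `v ∈ V_p` of `B(u,v)/‖v‖_X`
equals `‖u‖_L`, the supremum being attained (at `v = Pu`). -/
theorem inf_sup_identity {n p : ℕ} (M A : Matrix (Fin n) (Fin n) ℝ)
    (hM : M.PosDef) (hA : A.PosDef) (τ : ℝ) (hτ : 0 < τ) :
    (∀ c d : Fin (p + 1) → Fin n → ℝ,
      |Bform M A τ c (fun s => pev d s)| ≤ Lnorm M A τ c * Xnorm A (fun s => pev d s)) ∧
    (∀ c : Fin (p + 1) → Fin n → ℝ,
      Xnorm A (fun s => Pop M A τ c s) = Lnorm M A τ c) ∧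
    (∀ c : Fin (p + 1) → Fin n → ℝ, c ≠ 0 →
      IsGreatest {x : ℝ | ∃ d : Fin (p + 1) → Fin n → ℝ, d ≠ 0 ∧
          x = Bform M A τ c (fun s => pev d s) / Xnorm A (fun s => pev d s)}
        (Lnorm M A τ c)) :=
  inf_sup_identity_general M A hA τ
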